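/- arXiv:2603.26172 — 4 statements merged into one kernel-verified Lean document; each statement's English description precedes it below -/
import Mathlib

section
/- For all real numbers α and β with 0 < β < α, the function x ↦ sin(α·x)/sin(β·x) is strictly decreasing on the interval (0, π/α]; in particular it is injective on (0, π/α]. -/
open Real Set

/-!
This is Sturm comparison. If `f'' = -p f` and `g'' = -q g` with `q < p` and `f, g > 0`, then the
Wronskian `f g' - f' g` has derivative `(p - q) f g > 0`. If its initial value is nonnegative, it is
positive afterwards, so `(f / g)' = -(f g' - f' g) / g ^ 2 < 0`. For `f x = sin (α x)` and
`g x = sin (β x)` the coefficients are the constants `α ^ 2` and `β ^ 2`, and the Wronskian vanishes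
at `0`.
-/

/-- The Wronskian of `f` and `g`, the quantity whose sign governs the monotonicity of `f / g`.
The derivatives `f'` and `g'` are passed explicitly so that they may be one-sided at the endpoints
of an interval. -/
def wronskian {X A : Type*} [Ring A] (f f' g g' : X → A) (x : X) : A :=
  f x * g' x - f' x * g x

theorem hasDerivWithinAt_wronskian {𝕜 A : Type*} [NontriviallyNormedField 𝕜] [NormedRing A]
    [NormedAlgebra 𝕜 A] {f f' g g' : 𝕜 → A} {f'' g'' : A} {s : Set 𝕜} {x : 𝕜}
    (hf : HasDerivWithinAt f (f' x) s x) (hf' : HasDerivWithinAt f' f'' s x)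
    (hg : HasDerivWithinAt g (g' x) s x) (hg' : HasDerivWithinAt g' g'' s x) :
    HasDerivWithinAt (wronskian f f' g g') (f x * g'' - f'' * g x) s x :=
  ((hf.mul hg').sub (hf'.mul hg)).congr_deriv (by abel)

section Sturm

variable {f f' g g' : ℝ → ℝ}

theorem strictAntiOn_div_of_wronskian_pos {s : Set ℝ} (hs : Convex ℝ s)
    (hf : ∀ x ∈ s, HasDerivWithinAt f (f' x) s x) (hg : ∀ x ∈ s, HasDerivWithinAt g (g' x) s x)
    (hg_ne : ∀ x ∈ s, g x ≠ 0) (hW : ∀ x ∈ interior s, 0 < wronskian f f' g g' x) :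
    StrictAntiOn (fun x => f x / g x) s := by
  have hdiv : ∀ x ∈ s, HasDerivWithinAt (fun y => f y / g y)
      (-wronskian f f' g g' x / g x ^ 2) s x := fun x hx =>
    ((hf x hx).fun_div (hg x hx) (hg_ne x hx)).congr_deriv (by rw [wronskian, neg_sub])
  refine strictAntiOn_of_hasDerivWithinAt_neg hs (fun x hx => (hdiv x hx).continuousWithinAt)
    (fun x hx => (hdiv x (interior_subset hx)).mono interior_subset) fun x hx => ?_
  exact div_neg_of_neg_of_pos (neg_neg_of_pos (hW x hx))
    (sq_pos_of_ne_zero (hg_ne x (interior_subset hx)))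

variable {p q : ℝ → ℝ}

theorem strictMonoOn_wronskian {s : Set ℝ} (hs : Convex ℝ s)
    (hf : ∀ x ∈ s, HasDerivWithinAt f (f' x) s x)
    (hf' : ∀ x ∈ s, HasDerivWithinAt f' (-(p x * f x)) s x)
    (hg : ∀ x ∈ s, HasDerivWithinAt g (g' x) s x)
    (hg' : ∀ x ∈ s, HasDerivWithinAt g' (-(q x * g x)) s x)
    (hqp : ∀ x ∈ interior s, q x < p x) (hfg : ∀ x ∈ interior s, 0 < f x * g x) :
    StrictMonoOn (wronskian f f' g g') s := by
  have hW : ∀ x ∈ s, HasDerivWithinAt (wronskian f f' g g')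
      ((p x - q x) * (f x * g x)) s x := fun x hx =>
    (hasDerivWithinAt_wronskian (hf x hx) (hf' x hx) (hg x hx) (hg' x hx)).congr_deriv (by ring)
  exact strictMonoOn_of_hasDerivWithinAt_pos hs (fun x hx => (hW x hx).continuousWithinAt)
    (fun x hx => (hW x (interior_subset hx)).mono interior_subset)
    fun x hx => mul_pos (sub_pos.2 (hqp x hx)) (hfg x hx)

theorem strictAntiOn_div_of_sturm {a b : ℝ}
    (hf : ∀ x ∈ Icc a b, HasDerivWithinAt f (f' x) (Icc a b) x)
    (hf' : ∀ x ∈ Icc a b, HasDerivWithinAt f' (-(p x * f x)) (Icc a b) x)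
    (hg : ∀ x ∈ Icc a b, HasDerivWithinAt g (g' x) (Icc a b) x)
    (hg' : ∀ x ∈ Icc a b, HasDerivWithinAt g' (-(q x * g x)) (Icc a b) x)
    (hqp : ∀ x ∈ Ioo a b, q x < p x) (hfg : ∀ x ∈ Ioo a b, 0 < f x * g x)
    (hg_ne : ∀ x ∈ Ioc a b, g x ≠ 0) (hWa : 0 ≤ wronskian f f' g g' a) :
    StrictAntiOn (fun x => f x / g x) (Ioc a b) := by
  have hW_mono : StrictMonoOn (wronskian f f' g g') (Icc a b) :=
    strictMonoOn_wronskian (convex_Icc a b) hf hf' hg hg'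
      (by rwa [interior_Icc]) (by rwa [interior_Icc])
  have hW_pos : ∀ x ∈ Ioc a b, 0 < wronskian f f' g g' x := fun x hx =>
    hWa.trans_lt (hW_mono (left_mem_Icc.2 (hx.1.le.trans hx.2)) (Ioc_subset_Icc_self hx) hx.1)
  exact strictAntiOn_div_of_wronskian_pos (convex_Ioc a b)
    (fun x hx => (hf x (Ioc_subset_Icc_self hx)).mono Ioc_subset_Icc_self)
    (fun x hx => (hg x (Ioc_subset_Icc_self hx)).mono Ioc_subset_Icc_self)
    hg_ne fun x hx => hW_pos x (interior_subset hx)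

end Sturm

theorem hasDerivAt_sin_const_mul (c x : ℝ) :
    HasDerivAt (fun y => sin (c * y)) (c * cos (c * x)) x :=
  (hasDerivAt_const_mul c).sin.congr_deriv (mul_comm _ _)

theorem hasDerivAt_const_mul_cos_const_mul (c x : ℝ) :
    HasDerivAt (fun y => c * cos (c * y)) (-(c ^ 2 * sin (c * x))) x :=
  ((hasDerivAt_const_mul c).cos.const_mul c).congr_deriv (by ring)

theorem sin_const_mul_pos {c x : ℝ} (hc : 0 < c) (hx : x ∈ Ioo 0 (π / c)) : 0 < sin (c * x) :=
  sin_pos_of_pos_of_lt_pi (mul_pos hc hx.1) ((lt_div_iff₀' hc).1 hx.2)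

/-- For all real numbers `α` and `β` with `0 < β < α`, the function
`x ↦ sin (α * x) / sin (β * x)` is strictly decreasing on the interval `(0, π/α]`;
in particular it is injective on `(0, π/α]`. -/
theorem sin_ratio_strictAntiOn_and_injOn (α β : ℝ) (hβ : 0 < β) (hβα : β < α) :
    StrictAntiOn (fun x => Real.sin (α * x) / Real.sin (β * x)) (Set.Ioc 0 (π / α)) ∧
    Set.InjOn (fun x => Real.sin (α * x) / Real.sin (β * x)) (Set.Ioc 0 (π / α)) := by
  have hπ : π / α < π / β := div_lt_div_of_pos_left pi_pos hβ hβα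
  have hsinα : ∀ x ∈ Ioo 0 (π / α), 0 < sin (α * x) := fun x hx =>
    sin_const_mul_pos (hβ.trans hβα) hx
  have hsinβ : ∀ x ∈ Ioc 0 (π / α), 0 < sin (β * x) := fun x hx =>
    sin_const_mul_pos hβ ⟨hx.1, hx.2.trans_lt hπ⟩
  have hanti : StrictAntiOn (fun x => sin (α * x) / sin (β * x)) (Ioc 0 (π / α)) :=
    strictAntiOn_div_of_sturm (p := fun _ => α ^ 2) (q := fun _ => β ^ 2)
      (fun x _ => (hasDerivAt_sin_const_mul α x).hasDerivWithinAt)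
      (fun x _ => (hasDerivAt_const_mul_cos_const_mul α x).hasDerivWithinAt)
      (fun x _ => (hasDerivAt_sin_const_mul β x).hasDerivWithinAt)
      (fun x _ => (hasDerivAt_const_mul_cos_const_mul β x).hasDerivWithinAt)
      (fun _ _ => pow_lt_pow_left₀ hβα hβ.le two_ne_zero)
      (fun x hx => mul_pos (hsinα x hx) (hsinβ x (Ioo_subset_Ioc_self hx)))
      (fun x hx => (hsinβ x hx).ne')
      (by simp [wronskian])
  exact ⟨hanti, hanti.injOn⟩
end

section
/- Let n ≥ 2 be an integer, let ℓ > 0 and r > 0, and let k_D, k_N > 0 satisfy k_D + k_N = π/ℓ and k_D > π/(2ℓ). Let θ_D and θ_N be real numbers with 0 < k_D·r + θ_D < π and 0 < k_N·r + θ_N < π, and suppose that n·cot(k_D·ℓ) + cot(k_D·r + θ_D) = 0 and n·cot(k_N·ℓ) + cot(k_N·r + θ_N) = 0, where cot t := cos t / sin t. Then (k_D·r + θ_D) + (k_N·r + θ_N) = π; equivalently, θ_N = π·(1 − r/ℓ) − θ_D. -/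
open Real

/-!
Since `kD * ℓ` and `kN * ℓ` are supplementary angles, their cotangents are opposite, so the two
flux balances make `cot (kD * r + θD)` and `cot (kN * r + θN)` opposite as well. Hence the sine of
the sum of these two phases vanishes, and `π` is the only zero of the sine between `0` and `2 * π`.
-/

theorem mul_cot_add_cot_eq_zero_iff {c x y : ℝ} (hx : sin x ≠ 0) (hy : sin y ≠ 0) :
    c * (cos x / sin x) + cos y / sin y = 0 ↔ sin x * cos y = -(c * cos x) * sin y := by
  field_simp
  grind

theorem sin_add_eq_zero_of_mul_cos_eq_mul_sin {a b x y : ℝ} (hb : b ≠ 0)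
    (hx : b * cos x = -a * sin x) (hy : b * cos y = a * sin y) : sin (x + y) = 0 := by
  refine (mul_eq_zero.mp ?_).resolve_left hb
  rw [sin_add]
  linear_combination sin y * hx + sin x * hy

theorem add_eq_pi_of_sin_add_eq_zero {x y : ℝ} (hx : x ∈ Set.Ioo 0 π) (hy : y ∈ Set.Ioo 0 π)
    (h : sin (x + y) = 0) : x + y = π := by
  obtain ⟨hx0, hxπ⟩ := hx
  obtain ⟨hy0, hyπ⟩ := hy
  have hsin : sin (x + y - π) = 0 := by rw [sin_sub_pi, h, neg_zero]
  exact sub_eq_zero.mp <|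
    (sin_eq_zero_iff_of_lt_of_lt (by linarith) (by linarith)).mp hsin

theorem add_eq_pi_of_mul_cot_add_cot_eq_zero {c α β x y : ℝ} (hαβ : α + β = π)
    (hα : sin α ≠ 0) (hx : x ∈ Set.Ioo 0 π) (hy : y ∈ Set.Ioo 0 π)
    (hαx : c * (cos α / sin α) + cos x / sin x = 0)
    (hβy : c * (cos β / sin β) + cos y / sin y = 0) : x + y = π := by
  obtain rfl : β = π - α := eq_sub_of_add_eq' hαβ
  have hβ : sin (π - α) ≠ 0 := by rwa [sin_pi_sub]
  rw [mul_cot_add_cot_eq_zero_iff hα (sin_pos_of_mem_Ioo hx).ne'] at hαx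
  rw [mul_cot_add_cot_eq_zero_iff hβ (sin_pos_of_mem_Ioo hy).ne', sin_pi_sub, cos_pi_sub,
    mul_neg, neg_neg] at hβy
  exact add_eq_pi_of_sin_add_eq_zero hx hy (sin_add_eq_zero_of_mul_cos_eq_mul_sin hα hαx hβy)

theorem sin_mul_pos_of_add_eq_pi_div {ℓ k k' : ℝ} (hℓ : 0 < ℓ) (hk : 0 < k) (hk' : 0 < k')
    (hsum : k + k' = π / ℓ) : 0 < sin (k * ℓ) := by
  have hlt : k < π / ℓ := hsum ▸ lt_add_of_pos_right k hk'
  exact sin_pos_of_pos_of_lt_pi (mul_pos hk hℓ) ((lt_div_iff₀ hℓ).mp hlt)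

theorem kirchhoff_phase_relation_general {c ℓ r kD kN θD θN : ℝ} (hsin : sin (kD * ℓ) ≠ 0)
    (hsum : kD + kN = π / ℓ) (hD : kD * r + θD ∈ Set.Ioo 0 π) (hN : kN * r + θN ∈ Set.Ioo 0 π)
    (heqD : c * (cos (kD * ℓ) / sin (kD * ℓ)) + cos (kD * r + θD) / sin (kD * r + θD) = 0)
    (heqN : c * (cos (kN * ℓ) / sin (kN * ℓ)) + cos (kN * r + θN) / sin (kN * r + θN) = 0) :
    (kD * r + θD) + (kN * r + θN) = π ∧ θN = π * (1 - r / ℓ) - θD := by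
  have hℓ : ℓ ≠ 0 := by
    rintro rfl
    simp at hsin
  have hangles : kD * ℓ + kN * ℓ = π := by rw [← add_mul, hsum, div_mul_cancel₀ π hℓ]
  have hphases := add_eq_pi_of_mul_cot_add_cot_eq_zero hangles hsin hD hN heqD heqN
  refine ⟨hphases, ?_⟩
  linear_combination hphases - r * hsum

/-- Kirchhoff conditions at the centre of a pendant star: given `n ≥ 2`, `ℓ, r > 0`,
frequencies `k_D, k_N > 0` with `k_D + k_N = π/ℓ` and `k_D > π/(2ℓ)`, and phases
`θ_D, θ_N` with `k_D·r + θ_D, k_N·r + θ_N ∈ (0, π)` satisfying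
`n·cot(k_D·ℓ) + cot(k_D·r + θ_D) = 0` and `n·cot(k_N·ℓ) + cot(k_N·r + θ_N) = 0`
(where `cot t := cos t / sin t`), one has `(k_D·r + θ_D) + (k_N·r + θ_N) = π`;
equivalently, `θ_N = π(1 - r/ℓ) - θ_D`. -/
theorem kirchhoff_phase_relation (n : ℕ) (hn : 2 ≤ n) (ℓ r kD kN θD θN : ℝ)
    (hℓ : 0 < ℓ) (hr : 0 < r) (hkD : 0 < kD) (hkN : 0 < kN)
    (hsum : kD + kN = π / ℓ) (hkD2 : π / (2 * ℓ) < kD)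
    (hD1 : 0 < kD * r + θD) (hD2 : kD * r + θD < π)
    (hN1 : 0 < kN * r + θN) (hN2 : kN * r + θN < π)
    (heqD : (n : ℝ) * (Real.cos (kD * ℓ) / Real.sin (kD * ℓ)) +
      Real.cos (kD * r + θD) / Real.sin (kD * r + θD) = 0)
    (heqN : (n : ℝ) * (Real.cos (kN * ℓ) / Real.sin (kN * ℓ)) +
      Real.cos (kN * r + θN) / Real.sin (kN * r + θN) = 0) :
    (kD * r + θD) + (kN * r + θN) = π ∧ θN = π * (1 - r / ℓ) - θD := by
  exact kirchhoff_phase_relation_general (sin_mul_pos_of_add_eq_pi_div hℓ hkD hkN hsum).ne' hsum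
    ⟨hD1, hD2⟩ ⟨hN1, hN2⟩ heqD heqN
end

section
/- Let n ≥ 2 be an integer, let ℓ > 0 and r > 0, and let k_D, k_N > 0 satisfy k_D + k_N = π/ℓ and k_D > π/(2ℓ). Let θ_D and θ_N be real numbers with 0 < k_D·r + θ_D < π and 0 < k_N·r + θ_N < π, and suppose that n·cot(k_D·ℓ) + cot(k_D·r + θ_D) = 0 and n·cot(k_N·ℓ) + cot(k_N·r + θ_N) = 0, where cot t := cos t / sin t. Then (π − θ_N)/k_N < (π − θ_D)/k_D. -/
open Real

/-!
Each of the two lengths is compared with `ℓ + r`. If `c > 1` and `c * cot x + cot y = 0`, then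
`cot y = c * cot (π - x)` has the sign of `cot (π - x)` and is larger in absolute value, so, `cot`
being strictly decreasing on `(0, π)`, `y < π - x` for `x > π / 2` and `y > π - x` for `x < π / 2`.
Taking `x = k * ℓ` and `y = k * r + θ` turns this into a comparison of `π - θ` with `k * (ℓ + r)`.
-/

theorem cot_sub_cot {x y : ℝ} (hx : sin x ≠ 0) (hy : sin y ≠ 0) :
    cot x - cot y = sin (y - x) / (sin x * sin y) := by
  rw [cot_eq_cos_div_sin, cot_eq_cos_div_sin, div_sub_div _ _ hx hy, sin_sub]
  ring

theorem strictAntiOn_cot : StrictAntiOn cot (Set.Ioo 0 π) := by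
  intro x hx y hy hxy
  have hsin_x : 0 < sin x := sin_pos_of_mem_Ioo hx
  have hsin_y : 0 < sin y := sin_pos_of_mem_Ioo hy
  have hsin_sub : 0 < sin (y - x) :=
    sin_pos_of_pos_of_lt_pi (sub_pos.2 hxy) (by linarith [hx.1, hy.2])
  rw [← sub_pos, cot_sub_cot hsin_x.ne' hsin_y.ne']
  positivity

theorem cot_pi_sub (x : ℝ) : cot (π - x) = -cot x := by
  simp only [cot_eq_cos_div_sin, cos_pi_sub, sin_pi_sub, neg_div]

theorem cot_pos_of_mem_Ioo {x : ℝ} (hx : x ∈ Set.Ioo 0 (π / 2)) : 0 < cot x := by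
  rw [cot_eq_cos_div_sin]
  exact div_pos (cos_pos_of_mem_Ioo ⟨by linarith [hx.1, pi_pos], hx.2⟩)
    (sin_pos_of_pos_of_lt_pi hx.1 (by linarith [hx.2, pi_pos]))

section PhaseCondition

variable {c x y : ℝ}

theorem pi_lt_add_of_mul_cot_add_cot_eq_zero (hc : 1 < c) (hx : x ∈ Set.Ioo 0 (π / 2))
    (hy : y ∈ Set.Ioo 0 π) (h : c * cot x + cot y = 0) : π < x + y := by
  have hcot : cot y < cot (π - x) :=
    calc cot y = -(c * cot x) := by linarith
      _ < -cot x := neg_lt_neg (lt_mul_of_one_lt_left (cot_pos_of_mem_Ioo hx) hc)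
      _ = cot (π - x) := (cot_pi_sub x).symm
  have hx' : π - x ∈ Set.Ioo 0 π := ⟨by linarith [hx.2, pi_pos], by linarith [hx.1]⟩
  linarith [(strictAntiOn_cot.lt_iff_gt hy hx').1 hcot]

theorem add_lt_pi_of_mul_cot_add_cot_eq_zero (hc : 1 < c) (hx : x ∈ Set.Ioo (π / 2) π)
    (hy : y ∈ Set.Ioo 0 π) (h : c * cot x + cot y = 0) : x + y < π := by
  have hx' : π - x ∈ Set.Ioo 0 (π / 2) := ⟨by linarith [hx.2], by linarith [hx.1]⟩
  have hy' : π - y ∈ Set.Ioo 0 π := ⟨by linarith [hy.2], by linarith [hy.1]⟩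
  have h' : c * cot (π - x) + cot (π - y) = 0 := by
    rw [cot_pi_sub, cot_pi_sub]
    linarith
  linarith [pi_lt_add_of_mul_cot_add_cot_eq_zero hc hx' hy' h']

end PhaseCondition

section IntervalLength

variable {c k ℓ r θ : ℝ}

theorem pi_sub_div_lt_add_of_mul_cot_add_cot_eq_zero (hc : 1 < c) (hk : 0 < k)
    (hkℓ : k * ℓ ∈ Set.Ioo 0 (π / 2)) (hphase : k * r + θ ∈ Set.Ioo 0 π)
    (h : c * cot (k * ℓ) + cot (k * r + θ) = 0) :
    (π - θ) / k < ℓ + r := by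
  rw [div_lt_iff₀' hk]
  linarith [pi_lt_add_of_mul_cot_add_cot_eq_zero hc hkℓ hphase h]

theorem add_lt_pi_sub_div_of_mul_cot_add_cot_eq_zero (hc : 1 < c) (hk : 0 < k)
    (hkℓ : k * ℓ ∈ Set.Ioo (π / 2) π) (hphase : k * r + θ ∈ Set.Ioo 0 π)
    (h : c * cot (k * ℓ) + cot (k * r + θ) = 0) :
    ℓ + r < (π - θ) / k := by
  rw [lt_div_iff₀' hk]
  linarith [add_lt_pi_of_mul_cot_add_cot_eq_zero hc hkℓ hphase h]

end IntervalLength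

theorem mul_mem_Ioo_of_add_eq_pi_div {ℓ kD kN : ℝ} (hℓ : 0 < ℓ) (hkN : 0 < kN)
    (hsum : kD + kN = π / ℓ) (hkD : π / (2 * ℓ) < kD) :
    kD * ℓ ∈ Set.Ioo (π / 2) π ∧ kN * ℓ ∈ Set.Ioo 0 (π / 2) := by
  have hsum' : kD * ℓ + kN * ℓ = π := by rw [← add_mul, hsum, div_mul_cancel₀ _ hℓ.ne']
  have hkDℓ : π / 2 < kD * ℓ := by rwa [← div_lt_iff₀ hℓ, div_div]
  have hkNℓ : 0 < kN * ℓ := mul_pos hkN hℓ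
  exact ⟨⟨hkDℓ, by linarith⟩, ⟨hkNℓ, by linarith⟩⟩

theorem interval_length_comparison_general {cD cN ℓ r kD kN θD θN : ℝ}
    (hcD : 1 < cD) (hcN : 1 < cN) (hkD : 0 < kD) (hkN : 0 < kN)
    (hkDℓ : kD * ℓ ∈ Set.Ioo (π / 2) π) (hkNℓ : kN * ℓ ∈ Set.Ioo 0 (π / 2))
    (hphaseD : kD * r + θD ∈ Set.Ioo 0 π) (hphaseN : kN * r + θN ∈ Set.Ioo 0 π)
    (heqD : cD * cot (kD * ℓ) + cot (kD * r + θD) = 0)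
    (heqN : cN * cot (kN * ℓ) + cot (kN * r + θN) = 0) :
    (π - θN) / kN < (π - θD) / kD :=
  (pi_sub_div_lt_add_of_mul_cot_add_cot_eq_zero hcN hkN hkNℓ hphaseN heqN).trans
    (add_lt_pi_sub_div_of_mul_cot_add_cot_eq_zero hcD hkD hkDℓ hphaseD heqD)

/-- Under the Kirchhoff conditions at the centre of a pendant star (with `n ≥ 2`,
`ℓ, r > 0`, frequencies `k_D, k_N > 0` with `k_D + k_N = π/ℓ`, `k_D > π/(2ℓ)`, and phases
`θ_D, θ_N` with `k_D·r + θ_D, k_N·r + θ_N ∈ (0, π)` satisfying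
`n·cot(k_D·ℓ) + cot(k_D·r + θ_D) = 0` and `n·cot(k_N·ℓ) + cot(k_N·r + θ_N) = 0`,
where `cot t := cos t / sin t`), the interval lengths satisfy
`(π - θ_N)/k_N < (π - θ_D)/k_D`. -/
theorem interval_length_comparison (n : ℕ) (hn : 2 ≤ n) (ℓ r kD kN θD θN : ℝ)
    (hℓ : 0 < ℓ) (hr : 0 < r) (hkD : 0 < kD) (hkN : 0 < kN)
    (hsum : kD + kN = π / ℓ) (hkD2 : π / (2 * ℓ) < kD)
    (hD1 : 0 < kD * r + θD) (hD2 : kD * r + θD < π)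
    (hN1 : 0 < kN * r + θN) (hN2 : kN * r + θN < π)
    (heqD : (n : ℝ) * (Real.cos (kD * ℓ) / Real.sin (kD * ℓ)) +
      Real.cos (kD * r + θD) / Real.sin (kD * r + θD) = 0)
    (heqN : (n : ℝ) * (Real.cos (kN * ℓ) / Real.sin (kN * ℓ)) +
      Real.cos (kN * r + θN) / Real.sin (kN * r + θN) = 0) :
    (π - θN) / kN < (π - θD) / kD := by
  have hn' : (1 : ℝ) < n := by exact_mod_cast hn
  obtain ⟨hkDℓ, hkNℓ⟩ := mul_mem_Ioo_of_add_eq_pi_div hℓ hkN hsum hkD2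
  simp only [← cot_eq_cos_div_sin] at heqD heqN
  exact interval_length_comparison_general hn' hn' hkD hkN hkDℓ hkNℓ ⟨hD1, hD2⟩ ⟨hN1, hN2⟩
    heqD heqN
end

section
/- Let n ≥ 2 be an integer, ℓ > 0, and let k_D, k_N be real numbers with 0 < k_N < k_D < π/ℓ. Let c > 0 and c₀ > 0, and let θ_D, θ_N be real numbers with 0 < k_D·θ_D < π and 0 < k_N·θ_N < π. Suppose the following four equations hold: c₀·sin(k_D·θ_D) = c·sin(k_D·ℓ); c₀·sin(k_N·θ_N) = c·sin(k_N·ℓ); n·c·cos(k_D·ℓ) = c₀·cos(k_D·θ_D); and n·c·cos(k_N·ℓ) = c₀·cos(k_N·θ_N). Then k_D + k_N = π/ℓ. -/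
open Real

/-!
Squaring and adding the continuity and Kirchhoff conditions eliminates the phase and leaves
`c₀² = c² (1 + (n² - 1) cos² (kℓ))`. Both frequencies share `c` and `c₀`, so they share
`cos² (kℓ)`, and two distinct angles in `[0, π]` with the same squared cosine are supplementary.
-/

section VertexConditions

variable {m c c₀ x y φ ψ : ℝ}

theorem amplitude_sq_eq_of_vertex_conditions
    (continuity : c₀ * Real.sin φ = c * Real.sin x)
    (kirchhoff : m * c * Real.cos x = c₀ * Real.cos φ) :
    c₀ ^ 2 = c ^ 2 * (1 + (m ^ 2 - 1) * Real.cos x ^ 2) :=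
  calc
    c₀ ^ 2 = (c₀ * Real.sin φ) ^ 2 + (c₀ * Real.cos φ) ^ 2 := by
      linear_combination -c₀ ^ 2 * Real.sin_sq_add_cos_sq φ
    _ = (c * Real.sin x) ^ 2 + (m * c * Real.cos x) ^ 2 := by rw [continuity, kirchhoff]
    _ = c ^ 2 * (1 + (m ^ 2 - 1) * Real.cos x ^ 2) := by
      linear_combination c ^ 2 * Real.sin_sq_add_cos_sq x

theorem cos_sq_eq_cos_sq_of_vertex_conditions (hm : m ^ 2 ≠ 1) (hc : c ≠ 0)
    (continuity_x : c₀ * Real.sin φ = c * Real.sin x)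
    (continuity_y : c₀ * Real.sin ψ = c * Real.sin y)
    (kirchhoff_x : m * c * Real.cos x = c₀ * Real.cos φ)
    (kirchhoff_y : m * c * Real.cos y = c₀ * Real.cos ψ) :
    Real.cos x ^ 2 = Real.cos y ^ 2 := by
  have amplitude_x := amplitude_sq_eq_of_vertex_conditions continuity_x kirchhoff_x
  have amplitude_y := amplitude_sq_eq_of_vertex_conditions continuity_y kirchhoff_y
  have coeff_ne_zero : c ^ 2 * (m ^ 2 - 1) ≠ 0 :=
    mul_ne_zero (pow_ne_zero 2 hc) (sub_ne_zero.2 hm)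
  apply mul_left_cancel₀ coeff_ne_zero
  linear_combination amplitude_y - amplitude_x

end VertexConditions

theorem add_eq_pi_of_cos_sq_eq_cos_sq {x y : ℝ} (hx : x ∈ Set.Icc 0 π) (hy : y ∈ Set.Icc 0 π)
    (hxy : x ≠ y) (hcos : Real.cos x ^ 2 = Real.cos y ^ 2) : x + y = π := by
  rcases sq_eq_sq_iff_eq_or_eq_neg.1 hcos with cos_eq | cos_eq_neg
  · exact absurd (Real.injOn_cos hx hy cos_eq) hxy
  · have hy' : π - y ∈ Set.Icc 0 π := ⟨sub_nonneg.2 hy.2, sub_le_self π hy.1⟩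
    rw [← Real.cos_pi_sub] at cos_eq_neg
    exact eq_sub_iff_add_eq.1 (Real.injOn_cos hx hy' cos_eq_neg)

theorem star_frequency_relation_general {m ℓ kD kN c c₀ φD φN : ℝ} (hm : m ^ 2 ≠ 1) (hℓ : 0 < ℓ)
    (hkD : kD ∈ Set.Icc 0 (π / ℓ)) (hkN : kN ∈ Set.Icc 0 (π / ℓ)) (hne : kD ≠ kN) (hc : c ≠ 0)
    (continuityD : c₀ * Real.sin φD = c * Real.sin (kD * ℓ))
    (continuityN : c₀ * Real.sin φN = c * Real.sin (kN * ℓ))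
    (kirchhoffD : m * c * Real.cos (kD * ℓ) = c₀ * Real.cos φD)
    (kirchhoffN : m * c * Real.cos (kN * ℓ) = c₀ * Real.cos φN) :
    kD + kN = π / ℓ := by
  have angle_mem {k : ℝ} (hk : k ∈ Set.Icc 0 (π / ℓ)) : k * ℓ ∈ Set.Icc 0 π :=
    ⟨mul_nonneg hk.1 hℓ.le, (le_div_iff₀ hℓ).1 hk.2⟩
  have angle_ne : kD * ℓ ≠ kN * ℓ := (mul_left_injective₀ hℓ.ne').ne hne
  have cos_sq_eq : Real.cos (kD * ℓ) ^ 2 = Real.cos (kN * ℓ) ^ 2 :=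
    cos_sq_eq_cos_sq_of_vertex_conditions hm hc continuityD continuityN kirchhoffD kirchhoffN
  rw [eq_div_iff hℓ.ne', add_mul]
  exact add_eq_pi_of_cos_sq_eq_cos_sq (angle_mem hkD) (angle_mem hkN) angle_ne cos_sq_eq

/-- Continuity and Kirchhoff conditions at the central vertex of an equilateral pendant star
with `n ≥ 2` Dirichlet edges of length `ℓ`, for two positive eigenfunctions of frequencies
`k_D > k_N > 0` (with `k_D < π/ℓ`), amplitudes `c, c₀ > 0` and phases `θ_D, θ_N` with
`k_D·θ_D, k_N·θ_N ∈ (0, π)`, force the frequency relation `k_D + k_N = π/ℓ`. -/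
theorem star_frequency_relation (n : ℕ) (hn : 2 ≤ n) (ℓ kD kN c c₀ θD θN : ℝ)
    (hℓ : 0 < ℓ) (hkN : 0 < kN) (hNk : kN < kD) (hkD : kD < π / ℓ)
    (hc : 0 < c) (hc₀ : 0 < c₀)
    (hθD1 : 0 < kD * θD) (hθD2 : kD * θD < π)
    (hθN1 : 0 < kN * θN) (hθN2 : kN * θN < π)
    (e1 : c₀ * Real.sin (kD * θD) = c * Real.sin (kD * ℓ))
    (e2 : c₀ * Real.sin (kN * θN) = c * Real.sin (kN * ℓ))
    (e3 : (n : ℝ) * c * Real.cos (kD * ℓ) = c₀ * Real.cos (kD * θD))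
    (e4 : (n : ℝ) * c * Real.cos (kN * ℓ) = c₀ * Real.cos (kN * θN)) :
    kD + kN = π / ℓ := by
  have hn_sq : (n : ℝ) ^ 2 ≠ 1 := (one_lt_pow₀ (Nat.one_lt_cast.2 hn) two_ne_zero).ne'
  exact star_frequency_relation_general hn_sq hℓ ⟨(hkN.trans hNk).le, hkD.le⟩
    ⟨hkN.le, (hNk.trans hkD).le⟩ hNk.ne' hc.ne' e1 e2 e3 e4
end
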